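/- arXiv:0904.1158 — 3 statements merged into one kernel-verified Lean document; each statement's English description precedes it below -/
import Mathlib

section
/- In the affine Hecke–Clifford algebra H_n^c(F), define for 1 ≤ j ≤ n−1 the intertwining element Φ_j = s_j(x_j² − x_{j+1}²) + (x_j + x_{j+1}) + c_j c_{j+1}(x_j − x_{j+1}). Then for every 1 ≤ k ≤ n−2: Φ_k Φ_{k+1} Φ_k − Φ_{k+1} Φ_k Φ_{k+1} = (s_k s_{k+1} s_k − s_{k+1} s_k s_{k+1})(x_k² − x_{k+1}²)(x_k² − x_{k+2}²)(x_{k+1}² − x_{k+2}²). -/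
/-- Generators of the affine Hecke–Clifford algebra `H_n^c(F)` (0-indexed):
`s i` for `i : Fin (n-1)`, and `x i`, `c i` for `i : Fin n`. -/
inductive AHCGen (n : ℕ) : Type
  | s : Fin (n - 1) → AHCGen n
  | x : Fin n → AHCGen n
  | c : Fin n → AHCGen n

/-- The index `i` of the transposition `s i`, as an index in `Fin n`. -/
def idxL {n : ℕ} (i : Fin (n - 1)) : Fin n := ⟨i.val, by have := i.isLt; omega⟩

/-- The index `i + 1`, as an index in `Fin n`. -/
def idxR {n : ℕ} (i : Fin (n - 1)) : Fin n := ⟨i.val + 1, by have := i.isLt; omega⟩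

open FreeAlgebra in
/-- The defining relations of the affine Hecke–Clifford algebra `H_n^c(F)`. -/
inductive AHCRel (F : Type) [Field F] (n : ℕ) :
    FreeAlgebra F (AHCGen n) → FreeAlgebra F (AHCGen n) → Prop
  | s_sq (i : Fin (n - 1)) :
      AHCRel F n (ι F (AHCGen.s i) * ι F (AHCGen.s i)) 1
  | s_comm (i j : Fin (n - 1)) (h : i.val + 1 < j.val ∨ j.val + 1 < i.val) :
      AHCRel F n (ι F (AHCGen.s i) * ι F (AHCGen.s j))
        (ι F (AHCGen.s j) * ι F (AHCGen.s i))
  | braid (i j : Fin (n - 1)) (h : j.val = i.val + 1) :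
      AHCRel F n (ι F (AHCGen.s i) * ι F (AHCGen.s j) * ι F (AHCGen.s i))
        (ι F (AHCGen.s j) * ι F (AHCGen.s i) * ι F (AHCGen.s j))
  | x_comm (i j : Fin n) :
      AHCRel F n (ι F (AHCGen.x i) * ι F (AHCGen.x j))
        (ι F (AHCGen.x j) * ι F (AHCGen.x i))
  | c_sq (i : Fin n) :
      AHCRel F n (ι F (AHCGen.c i) * ι F (AHCGen.c i)) 1
  | c_anticomm (i j : Fin n) (h : i ≠ j) :
      AHCRel F n (ι F (AHCGen.c i) * ι F (AHCGen.c j))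
        (-(ι F (AHCGen.c j) * ι F (AHCGen.c i)))
  | s_x (i : Fin (n - 1)) :
      AHCRel F n (ι F (AHCGen.s i) * ι F (AHCGen.x (idxL i)))
        (ι F (AHCGen.x (idxR i)) * ι F (AHCGen.s i)
          - (1 + ι F (AHCGen.c (idxL i)) * ι F (AHCGen.c (idxR i))))
  | s_x_comm (i : Fin (n - 1)) (j : Fin n) (h1 : j ≠ idxL i) (h2 : j ≠ idxR i) :
      AHCRel F n (ι F (AHCGen.s i) * ι F (AHCGen.x j))
        (ι F (AHCGen.x j) * ι F (AHCGen.s i))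
  | s_c1 (i : Fin (n - 1)) :
      AHCRel F n (ι F (AHCGen.s i) * ι F (AHCGen.c (idxL i)))
        (ι F (AHCGen.c (idxR i)) * ι F (AHCGen.s i))
  | s_c2 (i : Fin (n - 1)) :
      AHCRel F n (ι F (AHCGen.s i) * ι F (AHCGen.c (idxR i)))
        (ι F (AHCGen.c (idxL i)) * ι F (AHCGen.s i))
  | s_c_comm (i : Fin (n - 1)) (j : Fin n) (h1 : j ≠ idxL i) (h2 : j ≠ idxR i) :
      AHCRel F n (ι F (AHCGen.s i) * ι F (AHCGen.c j))
        (ι F (AHCGen.c j) * ι F (AHCGen.s i))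
  | x_c_anti (i : Fin n) :
      AHCRel F n (ι F (AHCGen.x i) * ι F (AHCGen.c i))
        (-(ι F (AHCGen.c i) * ι F (AHCGen.x i)))
  | x_c_comm (i j : Fin n) (h : i ≠ j) :
      AHCRel F n (ι F (AHCGen.x i) * ι F (AHCGen.c j))
        (ι F (AHCGen.c j) * ι F (AHCGen.x i))

/-- The affine Hecke–Clifford algebra `H_n^c(F)`: the quotient of the free
`F`-algebra on the generators by the two-sided ideal generated by the defining
relations. -/
abbrev AHC (F : Type) [Field F] (n : ℕ) := RingQuot (AHCRel F n)

/-- The generator `s i` in `H_n^c(F)`. -/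
noncomputable def sE (F : Type) [Field F] (n : ℕ) (i : Fin (n - 1)) : AHC F n :=
  RingQuot.mkAlgHom F (AHCRel F n) (FreeAlgebra.ι F (AHCGen.s i))

/-- The generator `x i` in `H_n^c(F)`. -/
noncomputable def xE (F : Type) [Field F] (n : ℕ) (i : Fin n) : AHC F n :=
  RingQuot.mkAlgHom F (AHCRel F n) (FreeAlgebra.ι F (AHCGen.x i))

/-- The generator `c i` in `H_n^c(F)`. -/
noncomputable def cE (F : Type) [Field F] (n : ℕ) (i : Fin n) : AHC F n :=
  RingQuot.mkAlgHom F (AHCRel F n) (FreeAlgebra.ι F (AHCGen.c i))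

/-- The intertwining element
`Φ_j = s_j(x_j² − x_{j+1}²) + (x_j + x_{j+1}) + c_j c_{j+1}(x_j − x_{j+1})`. -/
noncomputable def PhiE (F : Type) [Field F] (n : ℕ) (j : Fin (n - 1)) : AHC F n :=
  sE F n j * (xE F n (idxL j) ^ 2 - xE F n (idxR j) ^ 2)
    + (xE F n (idxL j) + xE F n (idxR j))
    + cE F n (idxL j) * cE F n (idxR j) * (xE F n (idxL j) - xE F n (idxR j))

/-!
Write `Φ_s = s D_ij + e_ij` with `D_ij = x_i² - x_j²` and `e_ij = x_i + x_j + c_i c_j (x_i - x_j)`,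
where `s` and `t` swap `i`, `j` and `j`, `k` respectively. Then `Φ_s` permutes the `x`'s and `c`'s
exactly as `s` permutes indices, so `P = Φ_s Φ_t` satisfies `P D_ij = D_jk P` and
`P e_ij = e_jk P`. Expanding only the last factor of `Φ_s Φ_t Φ_s` and the first one of
`Φ_t Φ_s Φ_t`, the difference collapses to `(P s - t P) D_ij`. Finally
`P = s t D_ik D_jk + e_ik s D_ik + t e_ik D_jk + e_ik e_ij`, and `s` commutes with `D_ik D_jk`, so
that all but the leading term cancel in `P s - t P = (s t s - t s t) D_ik D_jk`.
-/

namespace AHC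

/-- The relations of the polynomial–Clifford part of the affine Hecke–Clifford algebra, for
families `x` and `c` of elements of a ring over an arbitrary index type. -/
structure IsPolynomialClifford {ι A : Type*} [Ring A] (x c : ι → A) : Prop where
  commute_x : ∀ i j, Commute (x i) (x j)
  c_mul_self : ∀ i, c i * c i = 1
  c_anticomm : ∀ i j, i ≠ j → c i * c j = -(c j * c i)
  x_mul_c_self : ∀ i, x i * c i = -(c i * x i)
  commute_x_c : ∀ i j, i ≠ j → Commute (x i) (c j)

/-- The relations between `s` and the polynomial–Clifford part that make `s` act like the
transposition of the indices `i` and `j`. The rules moving `s` past `x j` and `c j` are left out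
since they follow from those for `x i` and `c i`. -/
structure IsHeckeTransposition {ι A : Type*} [Ring A] (x c : ι → A) (s : A) (i j : ι) : Prop where
  mul_self : s * s = 1
  mul_x : s * x i = x j * s - (1 + c i * c j)
  commute_x : ∀ l, l ≠ i → l ≠ j → Commute s (x l)
  mul_c : s * c i = c j * s
  commute_c : ∀ l, l ≠ i → l ≠ j → Commute s (c l)

/-- The correction term in the rule `s * x i ^ 2 = x j ^ 2 * s - correction x c i j` for a Hecke
transposition `s` of `i` and `j`. -/
def correction {ι A : Type*} [Ring A] (x c : ι → A) (i j : ι) : A :=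
  x i + x j + c i * c j * (x i - x j)

/-- The intertwining element `Φ` attached to a Hecke transposition `s` of `i` and `j`. -/
def intertwiner {ι A : Type*} [Ring A] (x c : ι → A) (s : A) (i j : ι) : A :=
  s * (x i ^ 2 - x j ^ 2) + (x i + x j) + c i * c j * (x i - x j)

section

variable {ι A : Type*} [Ring A] {x c : ι → A} {r s t : A} {i i' j j' k : ι}

theorem intertwiner_eq_add_correction :
    intertwiner x c s i j = s * (x i ^ 2 - x j ^ 2) + correction x c i j :=
  add_assoc _ _ _

theorem semiconjBy_correction (hxi : SemiconjBy r (x i) (x i')) (hxj : SemiconjBy r (x j) (x j'))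
    (hci : SemiconjBy r (c i) (c i')) (hcj : SemiconjBy r (c j) (c j')) :
    SemiconjBy r (correction x c i j) (correction x c i' j') :=
  (hxi.add_right hxj).add_right ((hci.mul_right hcj).mul_right (hxi.sub_right hxj))

namespace IsPolynomialClifford

theorem commute_x_sq_sub_x (h : IsPolynomialClifford x c) (i j k : ι) :
    Commute (x i ^ 2 - x j ^ 2) (x k) :=
  ((h.commute_x i k).pow_left 2).sub_left ((h.commute_x j k).pow_left 2)

theorem commute_x_sq_sub_x_sq_sub (h : IsPolynomialClifford x c) (i j k l : ι) :
    Commute (x i ^ 2 - x j ^ 2) (x k ^ 2 - x l ^ 2) :=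
  ((h.commute_x_sq_sub_x i j k).pow_right 2).sub_right ((h.commute_x_sq_sub_x i j l).pow_right 2)

theorem commute_x_sq_c (h : IsPolynomialClifford x c) (i j : ι) : Commute (x i ^ 2) (c j) := by
  rcases eq_or_ne i j with rfl | hij
  · rw [Commute, SemiconjBy, sq, mul_assoc, h.x_mul_c_self, mul_neg, ← mul_assoc, h.x_mul_c_self,
      neg_mul, neg_neg, mul_assoc]
  · exact (h.commute_x_c i j hij).pow_left 2

theorem commute_x_sq_sub_c (h : IsPolynomialClifford x c) (i j k : ι) :
    Commute (x i ^ 2 - x j ^ 2) (c k) :=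
  (h.commute_x_sq_c i k).sub_left (h.commute_x_sq_c j k)

theorem commute_x_sq_sub_correction (h : IsPolynomialClifford x c) (i j k l : ι) :
    Commute (x i ^ 2 - x j ^ 2) (correction x c k l) :=
  semiconjBy_correction (h.commute_x_sq_sub_x i j k) (h.commute_x_sq_sub_x i j l)
    (h.commute_x_sq_sub_c i j k) (h.commute_x_sq_sub_c i j l)

theorem commute_x_correction (h : IsPolynomialClifford x c) (hki : k ≠ i) (hkj : k ≠ j) :
    Commute (x k) (correction x c i j) :=
  semiconjBy_correction (h.commute_x k i) (h.commute_x k j) (h.commute_x_c k i hki)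
    (h.commute_x_c k j hkj)

theorem commute_c_correction (h : IsPolynomialClifford x c) (hki : k ≠ i) (hkj : k ≠ j) :
    Commute (c k) (correction x c i j) := by
  have hi : Commute (c k) (x i) := (h.commute_x_c i k hki.symm).symm
  have hj : Commute (c k) (x j) := (h.commute_x_c j k hkj.symm).symm
  have hc : Commute (c k) (c i * c j) := by
    rw [Commute, SemiconjBy, ← mul_assoc, h.c_anticomm k i hki, neg_mul, mul_assoc,
      h.c_anticomm k j hkj, mul_neg, neg_neg, mul_assoc]
  exact (hi.add_right hj).add_right (hc.mul_right (hi.sub_right hj))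

theorem x_mul_c_mul_c_right (h : IsPolynomialClifford x c) (hij : i ≠ j) :
    x j * (c i * c j) = -(c i * c j * x j) := by
  rw [← mul_assoc, h.commute_x_c j i hij.symm, mul_assoc, h.x_mul_c_self, mul_neg, mul_assoc]

theorem correction_symm (h : IsPolynomialClifford x c) (hij : i ≠ j) :
    correction x c j i = correction x c i j := by
  rw [correction, correction, h.c_anticomm j i hij.symm]
  noncomm_ring

theorem intertwiner_neg_swap (h : IsPolynomialClifford x c) (hij : i ≠ j) :
    intertwiner x c (-s) j i = intertwiner x c s i j := by
  rw [intertwiner_eq_add_correction, intertwiner_eq_add_correction, h.correction_symm hij, neg_mul,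
    ← mul_neg, neg_sub]

theorem correction_mul_x (h : IsPolynomialClifford x c) (hij : i ≠ j) :
    correction x c i j * x i
      = x j * correction x c i j + (1 + c i * c j) * (x i ^ 2 - x j ^ 2) := by
  rw [correction, mul_add (x j), ← mul_assoc (x j) (c i * c j), h.x_mul_c_mul_c_right hij]
  noncomm_ring

theorem correction_mul_c (h : IsPolynomialClifford x c) (hij : i ≠ j) :
    correction x c i j * c i = c j * correction x c i j := by
  have x_add_mul_c : (x i + x j) * c i = c i * (x j - x i) := by
    rw [add_mul, h.x_mul_c_self, h.commute_x_c j i hij.symm]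
    noncomm_ring
  have x_sub_mul_c : (x i - x j) * c i = -(c i * (x i + x j)) := by
    rw [sub_mul, h.x_mul_c_self, h.commute_x_c j i hij.symm]
    noncomm_ring
  have c_mul_c_mul_left : c i * c j * c i = -c j := by
    rw [mul_assoc, h.c_anticomm j i hij.symm, mul_neg, ← mul_assoc, h.c_mul_self, one_mul]
  have c_mul_c_mul_right : c j * (c i * c j) = -c i := by
    rw [h.c_anticomm i j hij, mul_neg, ← mul_assoc, h.c_mul_self, one_mul]
  calc
    _ = (x i + x j) * c i + c i * c j * ((x i - x j) * c i) := by
      rw [correction, add_mul, mul_assoc _ (x i - x j)]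
    _ = c i * (x j - x i) - c i * c j * c i * (x i + x j) := by
      rw [x_add_mul_c, x_sub_mul_c, mul_neg, ← mul_assoc, ← sub_eq_add_neg]
    _ = c j * (x i + x j) + c j * (c i * c j) * (x i - x j) := by
      rw [c_mul_c_mul_left, c_mul_c_mul_right]
      noncomm_ring
    _ = _ := by rw [correction, mul_assoc (c j), ← mul_add]

theorem one_add_c_mul_c_mul_one_sub (h : IsPolynomialClifford x c) (hij : i ≠ j) (hik : i ≠ k)
    (hjk : j ≠ k) : (1 + c i * c k) * (1 - c i * c j) = (1 + c j * c i) * (1 - c j * c k) := by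
  have left : c i * c k * (c i * c j) = c j * c k := by
    rw [h.c_anticomm i k hik, neg_mul, mul_assoc, ← mul_assoc (c i), h.c_mul_self, one_mul,
      h.c_anticomm k j hjk.symm, neg_neg]
  have right : c j * c i * (c j * c k) = -(c i * c k) := by
    rw [h.c_anticomm j i hij.symm, neg_mul, mul_assoc, ← mul_assoc (c j), h.c_mul_self, one_mul]
  rw [add_mul, add_mul, one_mul, one_mul, mul_sub, mul_sub, mul_one, mul_one, left, right,
    h.c_anticomm j i hij.symm]
  abel

end IsPolynomialClifford

namespace IsHeckeTransposition

theorem mul_c_right (hs : IsHeckeTransposition x c s i j) : s * c j = c i * s := by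
  rw [← mul_one (c j), ← hs.mul_self, ← mul_assoc (c j), ← hs.mul_c, ← mul_assoc, ← mul_assoc,
    hs.mul_self, one_mul]

theorem mul_x_right (hs : IsHeckeTransposition x c s i j) (h : IsPolynomialClifford x c)
    (hij : i ≠ j) : s * x j = x i * s + (1 - c i * c j) := by
  have conj_c_mul_c : s * (c i * c j) * s = -(c i * c j) := by
    rw [← mul_assoc, hs.mul_c, mul_assoc (c j), hs.mul_c_right, mul_assoc, mul_assoc, hs.mul_self,
      mul_one, h.c_anticomm j i hij.symm]
  calc
    s * x j = s * (x j * s) * s := by rw [mul_assoc, mul_assoc, hs.mul_self, mul_one]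
    _ = s * (s * x i + (1 + c i * c j)) * s := by rw [hs.mul_x, sub_add_cancel]
    _ = s * s * x i * s + (s * s + s * (c i * c j) * s) := by noncomm_ring
    _ = x i * s + (1 - c i * c j) := by
      rw [hs.mul_self, one_mul, conj_c_mul_c, ← sub_eq_add_neg]

-- Reduces every statement about `s` and `j` to the corresponding one about `s` and `i`.
theorem neg_swap (hs : IsHeckeTransposition x c s i j) (h : IsPolynomialClifford x c)
    (hij : i ≠ j) : IsHeckeTransposition x c (-s) j i where
  mul_self := by rw [neg_mul_neg, hs.mul_self]
  mul_x := by
    rw [neg_mul, hs.mul_x_right h hij, h.c_anticomm j i hij.symm]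
    noncomm_ring
  commute_x l hj hi := (hs.commute_x l hi hj).neg_left
  mul_c := by rw [neg_mul, hs.mul_c_right, mul_neg]
  commute_c l hj hi := (hs.commute_c l hi hj).neg_left

theorem mul_x_sq (hs : IsHeckeTransposition x c s i j) (h : IsPolynomialClifford x c)
    (hij : i ≠ j) : s * x i ^ 2 = x j ^ 2 * s - correction x c i j := by
  calc
    s * x i ^ 2 = s * x i * x i := by rw [sq, mul_assoc]
    _ = x j * (x j * s - (1 + c i * c j)) - (1 + c i * c j) * x i := by
      rw [hs.mul_x, sub_mul, mul_assoc, hs.mul_x]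
    _ = x j ^ 2 * s - (x j + x j * (c i * c j) + (1 + c i * c j) * x i) := by noncomm_ring
    _ = x j ^ 2 * s - correction x c i j := by
      rw [h.x_mul_c_mul_c_right hij, correction]
      noncomm_ring

theorem x_sq_sub_mul (hs : IsHeckeTransposition x c s i j) (h : IsPolynomialClifford x c)
    (hij : i ≠ j) (hki : k ≠ i) (hkj : k ≠ j) :
    (x j ^ 2 - x k ^ 2) * s = s * (x i ^ 2 - x k ^ 2) + correction x c i j := by
  rw [sub_mul, mul_sub, hs.mul_x_sq h hij, ((hs.commute_x k hki hkj).pow_right 2).eq]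
  abel

theorem x_sq_sub_mul_right (hs : IsHeckeTransposition x c s i j) (h : IsPolynomialClifford x c)
    (hij : i ≠ j) (hki : k ≠ i) (hkj : k ≠ j) :
    (x i ^ 2 - x k ^ 2) * s = s * (x j ^ 2 - x k ^ 2) - correction x c i j := by
  rw [← neg_inj, ← mul_neg, (hs.neg_swap h hij).x_sq_sub_mul h hij.symm hkj hki,
    h.correction_symm hij]
  noncomm_ring

theorem commute_x_sq_sub_mul_x_sq_sub (hs : IsHeckeTransposition x c s i j)
    (h : IsPolynomialClifford x c) (hij : i ≠ j) (hki : k ≠ i) (hkj : k ≠ j) :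
    Commute ((x i ^ 2 - x k ^ 2) * (x j ^ 2 - x k ^ 2)) s := by
  rw [Commute, SemiconjBy, mul_assoc, hs.x_sq_sub_mul h hij hki hkj, mul_add, ← mul_assoc,
    hs.x_sq_sub_mul_right h hij hki hkj, sub_mul, (h.commute_x_sq_sub_correction i k i j).eq,
    sub_add_cancel, mul_assoc, (h.commute_x_sq_sub_x_sq_sub j k i k).eq]

theorem mul_correction (hs : IsHeckeTransposition x c s i j) (h : IsPolynomialClifford x c)
    (hij : i ≠ j) (hki : k ≠ i) (hkj : k ≠ j) :
    s * correction x c j k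
      = correction x c i k * s + (1 + c i * c k) * (1 - c i * c j) := by
  have mul_c_mul_c : s * (c j * c k) = c i * c k * s := by
    rw [← mul_assoc, hs.mul_c_right, mul_assoc, hs.commute_c k hki hkj, mul_assoc]
  rw [correction, mul_add, ← mul_assoc, mul_c_mul_c, mul_assoc _ s, mul_add, mul_sub,
    hs.mul_x_right h hij, hs.commute_x k hki hkj, correction]
  noncomm_ring

theorem semiconjBy_intertwiner_x (hs : IsHeckeTransposition x c s i j)
    (h : IsPolynomialClifford x c) (hij : i ≠ j) :
    SemiconjBy (intertwiner x c s i j) (x i) (x j) := by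
  rw [SemiconjBy, intertwiner_eq_add_correction, add_mul, mul_assoc,
    h.commute_x_sq_sub_x i j i, ← mul_assoc, hs.mul_x, h.correction_mul_x hij]
  noncomm_ring

theorem semiconjBy_intertwiner_c (hs : IsHeckeTransposition x c s i j)
    (h : IsPolynomialClifford x c) (hij : i ≠ j) :
    SemiconjBy (intertwiner x c s i j) (c i) (c j) := by
  rw [SemiconjBy, intertwiner_eq_add_correction, add_mul, mul_assoc,
    h.commute_x_sq_sub_c i j i, ← mul_assoc, hs.mul_c, h.correction_mul_c hij, mul_assoc, mul_add]

theorem commute_intertwiner_x (hs : IsHeckeTransposition x c s i j)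
    (h : IsPolynomialClifford x c) (hki : k ≠ i) (hkj : k ≠ j) :
    Commute (intertwiner x c s i j) (x k) := by
  rw [intertwiner_eq_add_correction]
  exact ((hs.commute_x k hki hkj).mul_left (h.commute_x_sq_sub_x i j k)).add_left
    (h.commute_x_correction hki hkj).symm

theorem commute_intertwiner_c (hs : IsHeckeTransposition x c s i j)
    (h : IsPolynomialClifford x c) (hki : k ≠ i) (hkj : k ≠ j) :
    Commute (intertwiner x c s i j) (c k) := by
  rw [intertwiner_eq_add_correction]
  exact ((hs.commute_c k hki hkj).mul_left (h.commute_x_sq_sub_c i j k)).add_left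
    (h.commute_c_correction hki hkj).symm

theorem semiconjBy_intertwiner_correction (hs : IsHeckeTransposition x c s i j)
    (h : IsPolynomialClifford x c) (hij : i ≠ j) (hki : k ≠ i) (hkj : k ≠ j) :
    SemiconjBy (intertwiner x c s i j) (correction x c i k) (correction x c j k) :=
  semiconjBy_correction (hs.semiconjBy_intertwiner_x h hij) (hs.commute_intertwiner_x h hki hkj)
    (hs.semiconjBy_intertwiner_c h hij) (hs.commute_intertwiner_c h hki hkj)

theorem semiconjBy_intertwiner_correction_right (hs : IsHeckeTransposition x c s i j)
    (h : IsPolynomialClifford x c) (hij : i ≠ j) (hki : k ≠ i) (hkj : k ≠ j) :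
    SemiconjBy (intertwiner x c s i j) (correction x c j k) (correction x c i k) := by
  rw [← h.intertwiner_neg_swap hij]
  exact (hs.neg_swap h hij).semiconjBy_intertwiner_correction h hij.symm hkj hki

theorem semiconjBy_intertwiner_mul_intertwiner_x_sq_sub (hs : IsHeckeTransposition x c s i j)
    (ht : IsHeckeTransposition x c t j k) (h : IsPolynomialClifford x c) (hij : i ≠ j)
    (hik : i ≠ k) (hjk : j ≠ k) :
    SemiconjBy (intertwiner x c s i j * intertwiner x c t j k)
      (x i ^ 2 - x j ^ 2) (x j ^ 2 - x k ^ 2) := by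
  have x_left := (hs.semiconjBy_intertwiner_x h hij).mul_left (ht.commute_intertwiner_x h hij hik)
  have x_right := SemiconjBy.mul_left (hs.commute_intertwiner_x h hik.symm hjk.symm)
    (ht.semiconjBy_intertwiner_x h hjk)
  exact (x_left.pow_right 2).sub_right (x_right.pow_right 2)

theorem semiconjBy_intertwiner_mul_intertwiner_correction (hs : IsHeckeTransposition x c s i j)
    (ht : IsHeckeTransposition x c t j k) (h : IsPolynomialClifford x c) (hij : i ≠ j)
    (hik : i ≠ k) (hjk : j ≠ k) :
    SemiconjBy (intertwiner x c s i j * intertwiner x c t j k)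
      (correction x c i j) (correction x c j k) := by
  have t_semiconj := ht.semiconjBy_intertwiner_correction h hjk hij hik
  rw [h.correction_symm hij, h.correction_symm hik] at t_semiconj
  exact (hs.semiconjBy_intertwiner_correction h hij hik.symm hjk.symm).mul_left t_semiconj

theorem mul_correction_add_correction_mul (hs : IsHeckeTransposition x c s i j)
    (ht : IsHeckeTransposition x c t j k) (h : IsPolynomialClifford x c) (hij : i ≠ j)
    (hik : i ≠ k) (hjk : j ≠ k) :
    s * correction x c j k + correction x c i j * t
      = correction x c i k * s + t * correction x c i k := by
  have move_s := hs.mul_correction h hij hik.symm hjk.symm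
  have move_t := ht.mul_correction h hjk hij hik
  rw [h.correction_symm hik, h.correction_symm hij,
    ← h.one_add_c_mul_c_mul_one_sub hij hik hjk] at move_t
  rw [move_s, move_t]
  abel

theorem intertwiner_mul_intertwiner (hs : IsHeckeTransposition x c s i j)
    (ht : IsHeckeTransposition x c t j k) (h : IsPolynomialClifford x c) (hij : i ≠ j)
    (hik : i ≠ k) (hjk : j ≠ k) :
    intertwiner x c s i j * intertwiner x c t j k
      = s * t * ((x i ^ 2 - x k ^ 2) * (x j ^ 2 - x k ^ 2))
        + correction x c i k * s * (x i ^ 2 - x k ^ 2)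
        + t * correction x c i k * (x j ^ 2 - x k ^ 2)
        + correction x c i k * correction x c i j := by
  have semiconj := (hs.semiconjBy_intertwiner_correction_right h hij hik.symm hjk.symm).eq
  have x_sq_sub_mul_t :
      (x i ^ 2 - x j ^ 2) * t = t * (x i ^ 2 - x k ^ 2) + correction x c j k := by
    rw [← neg_inj, ← neg_mul, neg_sub, ht.x_sq_sub_mul_right h hjk hij hik]
    noncomm_ring
  calc
    _ = s * ((x i ^ 2 - x j ^ 2) * t) * (x j ^ 2 - x k ^ 2)
          + correction x c i j * t * (x j ^ 2 - x k ^ 2)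
          + correction x c i k * intertwiner x c s i j := by
      rw [intertwiner_eq_add_correction (s := t), mul_add, semiconj, intertwiner_eq_add_correction]
      noncomm_ring
    _ = s * t * ((x i ^ 2 - x k ^ 2) * (x j ^ 2 - x k ^ 2))
          + (s * correction x c j k + correction x c i j * t) * (x j ^ 2 - x k ^ 2)
          + correction x c i k * intertwiner x c s i j := by
      rw [x_sq_sub_mul_t]
      noncomm_ring
    _ = _ := by
      rw [hs.mul_correction_add_correction_mul ht h hij hik hjk, intertwiner_eq_add_correction]
      noncomm_ring

theorem intertwiner_mul_intertwiner_mul_sub (hs : IsHeckeTransposition x c s i j)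
    (ht : IsHeckeTransposition x c t j k) (h : IsPolynomialClifford x c) (hij : i ≠ j)
    (hik : i ≠ k) (hjk : j ≠ k) :
    intertwiner x c s i j * intertwiner x c t j k * s
        - t * (intertwiner x c s i j * intertwiner x c t j k)
      = (s * t * s - t * s * t) * ((x i ^ 2 - x k ^ 2) * (x j ^ 2 - x k ^ 2)) := by
  have symmetric := (hs.commute_x_sq_sub_mul_x_sq_sub h hij hik.symm hjk.symm).eq
  have x_sq_sub_mul_s := hs.x_sq_sub_mul h hij hik.symm hjk.symm
  have conj_x_sq_sub :
      (s * (x i ^ 2 - x k ^ 2) + correction x c i j) * s = x j ^ 2 - x k ^ 2 := by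
    rw [← x_sq_sub_mul_s, mul_assoc, hs.mul_self, mul_one]
  rw [hs.intertwiner_mul_intertwiner ht h hij hik hjk]
  generalize x i ^ 2 - x k ^ 2 = p at *
  generalize x j ^ 2 - x k ^ 2 = q at *
  generalize correction x c i k = f at *
  generalize correction x c i j = e at *
  calc
    _ = s * t * (p * q * s) + f * ((s * p + e) * s) + t * f * (q * s)
          - (t * s * t * (p * q) + t * f * (s * p + e) + t * t * f * q) := by noncomm_ring
    _ = s * t * (s * (p * q)) + f * q + t * f * (s * p + e)
          - (t * s * t * (p * q) + t * f * (s * p + e) + f * q) := by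
      rw [symmetric, conj_x_sq_sub, x_sq_sub_mul_s, ht.mul_self, one_mul]
    _ = _ := by noncomm_ring

end IsHeckeTransposition

end

end AHC

open AHC in
theorem ahc_phi_braid_defect_general {ι A : Type*} [Ring A] {x c : ι → A} {s t : A} {i j k : ι}
    (h : IsPolynomialClifford x c) (hs : IsHeckeTransposition x c s i j)
    (ht : IsHeckeTransposition x c t j k) (hij : i ≠ j) (hik : i ≠ k) (hjk : j ≠ k) :
    intertwiner x c s i j * intertwiner x c t j k * intertwiner x c s i j
        - intertwiner x c t j k * intertwiner x c s i j * intertwiner x c t j k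
      = (s * t * s - t * s * t)
          * ((x i ^ 2 - x j ^ 2) * (x i ^ 2 - x k ^ 2) * (x j ^ 2 - x k ^ 2)) := by
  have x_semiconj := hs.semiconjBy_intertwiner_mul_intertwiner_x_sq_sub ht h hij hik hjk
  have e_semiconj := hs.semiconjBy_intertwiner_mul_intertwiner_correction ht h hij hik hjk
  have x_commute := (h.commute_x_sq_sub_x_sq_sub i j i k).mul_right
    (h.commute_x_sq_sub_x_sq_sub i j j k)
  set P := intertwiner x c s i j * intertwiner x c t j k with P_def
  calc
    _ = P * (s * (x i ^ 2 - x j ^ 2) + correction x c i j)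
          - (t * (x j ^ 2 - x k ^ 2) + correction x c j k) * P := by
      rw [← intertwiner_eq_add_correction, ← intertwiner_eq_add_correction, P_def, mul_assoc _ _
        (intertwiner x c t j k)]
    _ = (P * s - t * P) * (x i ^ 2 - x j ^ 2) := by
      rw [mul_add, add_mul, e_semiconj, mul_assoc t, ← x_semiconj]
      noncomm_ring
    _ = _ := by
      rw [P_def, hs.intertwiner_mul_intertwiner_mul_sub ht h hij hik hjk, mul_assoc,
        ← x_commute.eq, mul_assoc (x i ^ 2 - x j ^ 2)]

namespace AHC

variable (F : Type) [Field F] (n : ℕ)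

theorem isPolynomialClifford : IsPolynomialClifford (xE F n) (cE F n) where
  commute_x i j := by
    simpa only [xE, map_mul, Commute, SemiconjBy]
      using RingQuot.mkAlgHom_rel F (AHCRel.x_comm i j)
  c_mul_self i := by
    simpa only [cE, map_mul, map_one] using RingQuot.mkAlgHom_rel F (AHCRel.c_sq i)
  c_anticomm i j hij := by
    simpa only [cE, map_mul, map_neg] using RingQuot.mkAlgHom_rel F (AHCRel.c_anticomm i j hij)
  x_mul_c_self i := by
    simpa only [xE, cE, map_mul, map_neg] using RingQuot.mkAlgHom_rel F (AHCRel.x_c_anti i)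
  commute_x_c i j hij := by
    simpa only [xE, cE, map_mul, Commute, SemiconjBy]
      using RingQuot.mkAlgHom_rel F (AHCRel.x_c_comm i j hij)

theorem isHeckeTransposition (i : Fin (n - 1)) :
    IsHeckeTransposition (xE F n) (cE F n) (sE F n i) (idxL i) (idxR i) where
  mul_self := by
    simpa only [sE, map_mul, map_one] using RingQuot.mkAlgHom_rel F (AHCRel.s_sq i)
  mul_x := by
    simpa only [sE, xE, cE, map_mul, map_sub, map_add, map_one]
      using RingQuot.mkAlgHom_rel F (AHCRel.s_x i)
  commute_x l hl hr := by
    simpa only [sE, xE, map_mul, Commute, SemiconjBy]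
      using RingQuot.mkAlgHom_rel F (AHCRel.s_x_comm i l hl hr)
  mul_c := by
    simpa only [sE, cE, map_mul] using RingQuot.mkAlgHom_rel F (AHCRel.s_c1 i)
  commute_c l hl hr := by
    simpa only [sE, cE, map_mul, Commute, SemiconjBy]
      using RingQuot.mkAlgHom_rel F (AHCRel.s_c_comm i l hl hr)

end AHC

/-- in `H_n^c(F)` (char F ≠ 2), for every `k` with `k` and `k+1`
both valid transposition indices,
`Φ_k Φ_{k+1} Φ_k − Φ_{k+1} Φ_k Φ_{k+1}
  = (s_k s_{k+1} s_k − s_{k+1} s_k s_{k+1})(x_k² − x_{k+1}²)(x_k² − x_{k+2}²)(x_{k+1}² − x_{k+2}²)`. -/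
theorem ahc_phi_braid_defect (F : Type) [Field F] (hF : (2 : F) ≠ 0)
    (n : ℕ) (k : ℕ) (hk : k + 2 < n) :
    PhiE F n ⟨k, by omega⟩ * PhiE F n ⟨k + 1, by omega⟩ * PhiE F n ⟨k, by omega⟩
        - PhiE F n ⟨k + 1, by omega⟩ * PhiE F n ⟨k, by omega⟩ * PhiE F n ⟨k + 1, by omega⟩
      = (sE F n ⟨k, by omega⟩ * sE F n ⟨k + 1, by omega⟩ * sE F n ⟨k, by omega⟩
            - sE F n ⟨k + 1, by omega⟩ * sE F n ⟨k, by omega⟩ * sE F n ⟨k + 1, by omega⟩)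
          * ((xE F n ⟨k, by omega⟩ ^ 2 - xE F n ⟨k + 1, by omega⟩ ^ 2)
              * (xE F n ⟨k, by omega⟩ ^ 2 - xE F n ⟨k + 2, by omega⟩ ^ 2)
              * (xE F n ⟨k + 1, by omega⟩ ^ 2 - xE F n ⟨k + 2, by omega⟩ ^ 2)) := by
  exact ahc_phi_braid_defect_general (AHC.isPolynomialClifford F n)
    (AHC.isHeckeTransposition F n ⟨k, by omega⟩) (AHC.isHeckeTransposition F n ⟨k + 1, by omega⟩)
    (by grind [idxL, idxR]) (by grind [idxL, idxR]) (by grind [idxL, idxR])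
end

section
/- Let F be a field of characteristic ≠ 2 and let M be a module over the affine Hecke–Clifford algebra H_n^c(F) such that, for each 1 ≤ j ≤ n, M is spanned over F by eigenvectors of the action of x_j (i.e. each x_j acts diagonalizably). Suppose z ∈ M is nonzero and there are scalars a_1,…,a_n ∈ F with x_j² z = a_j z for all 1 ≤ j ≤ n. Then a_k ≠ a_{k+1} for every 1 ≤ k ≤ n−1. -/
/-!
Write `x = x_k`, `y = x_{k+1}`, `s = s_k`, `e = c_k c_{k+1}`, so that `e² = -1` and `e` anticommutes
with `x` and `y`. Moving `s` past `x²` leaves the correction term `w = x + y + e (x - y)`, that is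
`y² s = s x² + w`. If `x² z = y² z = a z`, then `(y² - a) s z = w z` is again killed by `y² - a`,
and since `y` acts semisimply this forces `w z = 0`. But `w² = 2 (x² + y²)`, so `4 a z = 0` and
`a = 0`.

When `a = 0`, semisimplicity gives `y z = 0`, and replacing `z` by `x z` if necessary we may assume
`x z = 0` too. Then `y s z = (1 + e) z` is killed by `y`, so it vanishes by semisimplicity, and
`2 z = (1 - e) (1 + e) z = 0`.
-/

open Polynomial

theorem isSemisimpleModule_span_singleton_of_isMaximal {R M : Type*} [Ring R] [AddCommGroup M]
    [Module R M] {I : Ideal R} [I.IsMaximal] {m : M} (hm : ∀ r ∈ I, r • m = 0) :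
    IsSemisimpleModule R (R ∙ m) := by
  have : IsSimpleModule R (R ⧸ I) :=
    isSimpleModule_iff_quot_maximal.2 ⟨I, inferInstance, ⟨LinearEquiv.refl R _⟩⟩
  have hrange : R ∙ m = (I.liftQ (LinearMap.toSpanSingleton R M m) hm).range := by
    rw [LinearMap.span_singleton_eq_range]
    exact (Submodule.range_liftQ _ _ _).symm
  rw [hrange]
  exact .range _

theorem isSemisimpleModule_aeval_of_span_eigenvectors_eq_top {F A M : Type*} [Field F]
    [Ring A] [Algebra F A] [AddCommGroup M] [Module F M] [Module A M] [IsScalarTower F A M] {f : A}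
    (hf : Submodule.span F {v : M | ∃ b : F, f • v = b • v} = ⊤) :
    IsSemisimpleModule F[X] (Module.AEval F M f) := by
  let of := Module.AEval.of F M f
  let S : Set M := {v | ∃ b : F, f • v = b • v}
  have hspan : ⨆ v ∈ S, F[X] ∙ of v = ⊤ := by
    rw [← iSup_image (f := of) (g := fun u ↦ F[X] ∙ u), ← Submodule.span_eq_iSup_of_singleton_spans]
    apply Submodule.span_eq_top_of_span_eq_top F
    rw [← LinearEquiv.coe_coe, Submodule.span_image, hf, Submodule.map_top, LinearEquiv.range]
  refine isSemisimpleModule_of_isSemisimpleModule_submodule (s := S) ?_ hspan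
  rintro v ⟨b, hb⟩
  have : (Ideal.span {X - C b}).IsMaximal :=
    PrincipalIdealRing.isMaximal_of_irreducible (irreducible_X_sub_C b)
  refine isSemisimpleModule_span_singleton_of_isMaximal (I := Ideal.span {X - C b}) fun p hp ↦ ?_
  obtain ⟨q, rfl⟩ := Ideal.mem_span_singleton'.1 hp
  have hv : (X - C b) • of v = 0 := by
    rw [← Module.AEval.of_aeval_smul]
    simp [sub_smul, hb]
  rw [mul_smul, hv, smul_zero]

theorem smul_eq_zero_of_smul_smul_eq_zero {R M : Type*} [CommRing R] [AddCommGroup M] [Module R M]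
    [IsSemisimpleModule R M] {r : R} {m : M} (h : r • r • m = 0) : r • m = 0 := by
  rw [← Submodule.mem_annihilator_span_singleton]
  refine IsSemisimpleModule.annihilator_isRadical (R ∙ m) R ⟨2, ?_⟩
  rw [← Submodule.annihilator, Submodule.mem_annihilator_span_singleton, pow_two, mul_smul, h]

theorem aeval_smul_eq_zero_of_isSemisimpleModule {R A M : Type*} [CommRing R] [Ring A]
    [Algebra R A] [AddCommGroup M] [Module R M] [Module A M] [IsScalarTower R A M] {f : A}
    [IsSemisimpleModule R[X] (Module.AEval R M f)] (p : R[X]) {v : M}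
    (hv : aeval f p • aeval f p • v = 0) : aeval f p • v = 0 := by
  apply (Module.AEval.of R M f).injective
  rw [map_zero, Module.AEval.of_aeval_smul]
  apply smul_eq_zero_of_smul_smul_eq_zero
  rw [← Module.AEval.of_aeval_smul, ← Module.AEval.of_aeval_smul, hv, map_zero]

theorem smul_eq_zero_of_sq_smul_eq_zero (R : Type*) {A M : Type*} [CommRing R] [Ring A]
    [Algebra R A] [AddCommGroup M] [Module R M] [Module A M] [IsScalarTower R A M] {f : A}
    [IsSemisimpleModule R[X] (Module.AEval R M f)] {v : M} (hv : f ^ 2 • v = 0) : f • v = 0 := by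
  have h : aeval f (X : R[X]) • aeval f (X : R[X]) • v = 0 := by
    rwa [aeval_X, ← mul_smul, ← pow_two]
  simpa only [aeval_X] using aeval_smul_eq_zero_of_isSemisimpleModule X h

section DistribNeg

variable {A : Type*} [Monoid A] [HasDistribNeg A] {x e c d : A}

theorem semiconjBy_neg_iff : SemiconjBy e x (-x) ↔ x * e = -(e * x) := by
  rw [SemiconjBy, neg_mul, eq_comm, neg_eq_iff_eq_neg]

theorem commute_sq_of_semiconjBy_neg (h : SemiconjBy e x (-x)) : Commute e (x ^ 2) := by
  have := h.pow_right 2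
  rwa [neg_sq] at this

theorem mul_mul_self_eq_neg_one_of_anticommute (hc : c * c = 1) (hd : d * d = 1)
    (hcd : c * d = -(d * c)) : c * d * (c * d) = -1 := by
  calc c * d * (c * d) = c * d * -(d * c) := by rw [hcd]
    _ = -(c * (d * d) * c) := by simp only [mul_neg, mul_assoc]
    _ = -1 := by rw [hd, mul_one, hc]

end DistribNeg

section Ring

variable {A : Type*} [Ring A] {x y s e : A}

/-- The term `w = x + y + e (x - y)` left over when `s` is moved past `x²` in the affine
Hecke–Clifford algebra, where `x = x_k`, `y = x_{k+1}`, `e = c_k c_{k+1}`. It is the correction term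
of the intertwining element `s_k (x_k² - x_{k+1}²) + w`. -/
def intertwinerCorrection (x y e : A) : A := x + y + e * (x - y)

theorem sq_mul_eq_mul_sq_add_intertwinerCorrection (hsx : s * x = y * s - (1 + e))
    (hey : SemiconjBy e y (-y)) : y ^ 2 * s = s * x ^ 2 + intertwinerCorrection x y e := by
  have hys : y * s = s * x + (1 + e) := by rw [hsx, sub_add_cancel]
  have hye : y * e = -(e * y) := semiconjBy_neg_iff.1 hey
  calc y ^ 2 * s = (y * s) * x + y + y * e := by
        rw [pow_two, mul_assoc, hys, mul_add, ← mul_assoc, hys, mul_add, mul_one, ← add_assoc]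
    _ = s * x ^ 2 + intertwinerCorrection x y e := by
        rw [hys, hye, intertwinerCorrection]; noncomm_ring

theorem commute_sq_intertwinerCorrection (hxy : Commute x y) (hey : SemiconjBy e y (-y)) :
    Commute (y ^ 2) (intertwinerCorrection x y e) := by
  have hyx : Commute (y ^ 2) x := hxy.symm.pow_left 2
  have hyy : Commute (y ^ 2) y := (Commute.refl y).pow_left 2
  exact (hyx.add_right hyy).add_right
    ((commute_sq_of_semiconjBy_neg hey).symm.mul_right (hyx.sub_right hyy))

theorem intertwinerCorrection_sq (hxy : Commute x y) (he : e * e = -1)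
    (hex : SemiconjBy e x (-x)) (hey : SemiconjBy e y (-y)) :
    intertwinerCorrection x y e ^ 2 = 2 * (x ^ 2 + y ^ 2) := by
  have hadd : (x + y) * e = -(e * (x + y)) := by
    rw [mul_add, hex.eq, hey.eq]; noncomm_ring
  have hsub : (x - y) * e = -(e * (x - y)) := by
    rw [mul_sub, hex.eq, hey.eq]; noncomm_ring
  calc intertwinerCorrection x y e ^ 2
      = (x + y) ^ 2 + (x + y) * e * (x - y) + e * ((x - y) * (x + y))
          + e * ((x - y) * e) * (x - y) := by
        rw [intertwinerCorrection]; noncomm_ring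
    _ = (x + y) ^ 2 + e * (2 * (x * y - y * x)) - e * e * (x - y) ^ 2 := by
        rw [hadd, hsub]; noncomm_ring
    _ = 2 * (x ^ 2 + y ^ 2) := by
        rw [he, hxy.eq]; noncomm_ring

end Ring

/-- The relations between `x = x_k`, `y = x_{k+1}`, `s = s_k` and `e = c_k c_{k+1}` in the affine
Hecke–Clifford algebra that force consecutive eigenvalues to differ. Anticommutation of `e` with
`x` is encoded as `SemiconjBy e x (-x)`, that is `e x = (-x) e`. -/
structure HeckeCliffordRelations {A : Type*} [Ring A] (x y s e : A) : Prop where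
  commute_x_y : Commute x y
  e_mul_self : e * e = -1
  e_x : SemiconjBy e x (-x)
  e_y : SemiconjBy e y (-y)
  s_mul_x : s * x = y * s - (1 + e)

namespace HeckeCliffordRelations

variable {R A M : Type*} [CommRing R] [Ring A] [Algebra R A] [AddCommGroup M] [Module R M]
  [Module A M] [IsScalarTower R A M] {x y s e : A} {a : R} {z : M}

theorem intertwinerCorrection_smul_eq_zero [IsSemisimpleModule R[X] (Module.AEval R M y)]
    (h : HeckeCliffordRelations x y s e) (hx : x ^ 2 • z = a • z) (hy : y ^ 2 • z = a • z) :
    intertwinerCorrection x y e • z = 0 := by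
  have aeval_smul (v : M) : aeval y (X ^ 2 - C a) • v = y ^ 2 • v - a • v := by
    simp [sub_smul]
  have hs : aeval y (X ^ 2 - C a) • s • z = intertwinerCorrection x y e • z := by
    rw [aeval_smul, ← mul_smul, sq_mul_eq_mul_sq_add_intertwinerCorrection h.s_mul_x h.e_y,
      add_smul, mul_smul, hx, smul_algebra_smul_comm, add_sub_cancel_left]
  have hw : aeval y (X ^ 2 - C a) • intertwinerCorrection x y e • z = 0 := by
    rw [aeval_smul, ← mul_smul, (commute_sq_intertwinerCorrection h.commute_x_y h.e_y).eq,
      mul_smul, hy, smul_algebra_smul_comm, sub_self]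
  rw [← hs]
  apply aeval_smul_eq_zero_of_isSemisimpleModule
  rw [hs, hw]

theorem two_mul_two_mul_smul_eq_zero [IsSemisimpleModule R[X] (Module.AEval R M y)]
    (h : HeckeCliffordRelations x y s e) (hx : x ^ 2 • z = a • z) (hy : y ^ 2 • z = a • z) :
    (2 * 2 * a) • z = 0 := by
  calc (2 * 2 * a) • z = (2 : A) • (x ^ 2 + y ^ 2) • z := by
        rw [add_smul, hx, hy, two_smul, ← two_smul R, ← two_smul R, mul_assoc, mul_smul, mul_smul]
    _ = intertwinerCorrection x y e • intertwinerCorrection x y e • z := by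
        rw [← mul_smul, ← intertwinerCorrection_sq h.commute_x_y h.e_mul_self h.e_x h.e_y, pow_two,
          mul_smul]
    _ = 0 := by rw [h.intertwinerCorrection_smul_eq_zero hx hy, smul_zero]

variable (R) in
theorem two_smul_eq_zero_of_smul_eq_zero [IsSemisimpleModule R[X] (Module.AEval R M y)]
    (h : HeckeCliffordRelations x y s e) (hx : x • z = 0) (hy : y • z = 0) : (2 : R) • z = 0 := by
  have hys : y • s • z = (1 + e) • z := by
    rw [← mul_smul, ← sub_add_cancel (y * s) (1 + e), ← h.s_mul_x, add_smul, mul_smul, hx,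
      smul_zero, zero_add]
  have hye : y * (1 + e) = (1 - e) * y := by
    rw [sub_mul, h.e_y.eq]; noncomm_ring
  have hyys : y ^ 2 • s • z = 0 := by
    rw [pow_two, mul_smul, hys, ← mul_smul, hye, mul_smul, hy, smul_zero]
  have he : (1 - e) * (1 + e) = 2 := by
    calc (1 - e) * (1 + e) = 1 - e * e := by noncomm_ring
      _ = 2 := by rw [h.e_mul_self, sub_neg_eq_add, one_add_one_eq_two]
  calc (2 : R) • z = (2 : A) • z := by rw [two_smul, two_smul]
    _ = (1 - e) • y • s • z := by rw [← he, mul_smul, hys]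
    _ = 0 := by rw [smul_eq_zero_of_sq_smul_eq_zero R hyys, smul_zero]

variable {F : Type*} [Field F] [Algebra F A] [Module F M] [IsScalarTower F A M]

theorem eq_zero_of_sq_smul_eq_zero (hF : (2 : F) ≠ 0)
    [IsSemisimpleModule F[X] (Module.AEval F M y)] (h : HeckeCliffordRelations x y s e)
    (hx : x ^ 2 • z = 0) (hy : y ^ 2 • z = 0) : z = 0 := by
  have eq_zero {u : M} (hxu : x • u = 0) (hyu : y • u = 0) : u = 0 :=
    (smul_eq_zero.1 (h.two_smul_eq_zero_of_smul_eq_zero F hxu hyu)).resolve_left hF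
  have hyz : y • z = 0 := smul_eq_zero_of_sq_smul_eq_zero F hy
  have hxz : x • z = 0 := by
    refine eq_zero ?_ ?_
    · rw [← mul_smul, ← pow_two, hx]
    · rw [← mul_smul, ← h.commute_x_y.eq, mul_smul, hyz, smul_zero]
  exact eq_zero hxz hyz

theorem eigenvalues_ne (hF : (2 : F) ≠ 0) [IsSemisimpleModule F[X] (Module.AEval F M y)]
    (h : HeckeCliffordRelations x y s e) (hz : z ≠ 0) {a b : F} (hx : x ^ 2 • z = a • z)
    (hy : y ^ 2 • z = b • z) : a ≠ b := by
  rintro rfl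
  have h4a : 2 * 2 * a = 0 :=
    (smul_eq_zero.1 (h.two_mul_two_mul_smul_eq_zero hx hy)).resolve_right hz
  obtain rfl : a = 0 := (mul_eq_zero.1 h4a).resolve_left (mul_ne_zero hF hF)
  rw [zero_smul] at hx hy
  exact hz (h.eq_zero_of_sq_smul_eq_zero hF hx hy)

end HeckeCliffordRelations

section Generators

variable (F : Type) [Field F] {n : ℕ}

theorem commute_xE_xE (i j : Fin n) : Commute (xE F n i) (xE F n j) := by
  rw [commute_iff_eq]
  simpa only [xE, map_mul] using RingQuot.mkAlgHom_rel F (AHCRel.x_comm i j)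

theorem cE_mul_self (i : Fin n) : cE F n i * cE F n i = 1 := by
  simpa only [cE, map_mul, map_one] using RingQuot.mkAlgHom_rel F (AHCRel.c_sq i)

theorem cE_mul_cE_of_ne {i j : Fin n} (hij : i ≠ j) :
    cE F n i * cE F n j = -(cE F n j * cE F n i) := by
  simpa only [cE, map_mul, map_neg] using RingQuot.mkAlgHom_rel F (AHCRel.c_anticomm i j hij)

theorem semiconjBy_cE_xE (i : Fin n) : SemiconjBy (cE F n i) (xE F n i) (-xE F n i) := by
  have h : xE F n i * cE F n i = -(cE F n i * xE F n i) := by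
    simpa only [xE, cE, map_mul, map_neg] using RingQuot.mkAlgHom_rel F (AHCRel.x_c_anti i)
  exact (semiconjBy_neg_iff (A := AHC F n)).2 h

theorem commute_cE_xE_of_ne {i j : Fin n} (hij : i ≠ j) : Commute (cE F n j) (xE F n i) := by
  rw [commute_iff_eq, eq_comm]
  simpa only [xE, cE, map_mul] using RingQuot.mkAlgHom_rel F (AHCRel.x_c_comm i j hij)

theorem sE_mul_xE (i : Fin (n - 1)) :
    sE F n i * xE F n (idxL i) =
      xE F n (idxR i) * sE F n i - (1 + cE F n (idxL i) * cE F n (idxR i)) := by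
  simpa only [sE, xE, cE, map_mul, map_sub, map_add, map_one] using
    RingQuot.mkAlgHom_rel F (AHCRel.s_x i)

theorem heckeCliffordRelations_generators (i : Fin (n - 1)) :
    HeckeCliffordRelations (xE F n (idxL i)) (xE F n (idxR i)) (sE F n i)
      (cE F n (idxL i) * cE F n (idxR i)) := by
  have hne : idxL i ≠ idxR i := by simp [idxL, idxR]
  exact {
    commute_x_y := commute_xE_xE F _ _
    e_mul_self := mul_mul_self_eq_neg_one_of_anticommute (cE_mul_self F _) (cE_mul_self F _)
      (cE_mul_cE_of_ne F hne)
    e_x := (semiconjBy_cE_xE F _).mul_left (commute_cE_xE_of_ne F hne)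
    e_y := SemiconjBy.mul_left (commute_cE_xE_of_ne F hne.symm).neg_right (semiconjBy_cE_xE F _)
    s_mul_x := sE_mul_xE F i }

end Generators

theorem consecutive_eigenvalues_distinct_general {F : Type} [Field F] (hF : (2 : F) ≠ 0) {n : ℕ}
    {M : Type*} [AddCommGroup M] [Module F M] [Module (AHC F n) M] [IsScalarTower F (AHC F n) M]
    (i : Fin (n - 1)) [IsSemisimpleModule F[X] (Module.AEval F M (xE F n (idxR i)))]
    {z : M} (hz : z ≠ 0) {a b : F} (ha : xE F n (idxL i) ^ 2 • z = a • z)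
    (hb : xE F n (idxR i) ^ 2 • z = b • z) : a ≠ b :=
  (heckeCliffordRelations_generators F i).eigenvalues_ne hF hz ha hb

/-- if each `x_j` acts diagonalizably on the `H_n^c(F)`-module `M`
(char F ≠ 2), `z ≠ 0`, and `x_j² z = a_j z` for scalars `a_j ∈ F`, then
consecutive scalars are distinct: `a_k ≠ a_{k+1}`. -/
theorem consecutive_eigenvalues_distinct (F : Type) [Field F] (hF : (2 : F) ≠ 0)
    (n : ℕ) (M : Type) [AddCommGroup M] [Module F M] [Module (AHC F n) M]
    [IsScalarTower F (AHC F n) M]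
    (hdiag : ∀ j : Fin n,
      Submodule.span F {v : M | ∃ a : F, xE F n j • v = a • v} = ⊤)
    (z : M) (hz : z ≠ 0) (a : Fin n → F)
    (ha : ∀ j : Fin n, (xE F n j) ^ 2 • z = a j • z)
    (k : ℕ) (hk : k + 1 < n) :
    a ⟨k, Nat.lt_of_succ_lt hk⟩ ≠ a ⟨k + 1, hk⟩ := by
  let i : Fin (n - 1) := ⟨k, Nat.lt_sub_of_add_lt hk⟩
  have := isSemisimpleModule_aeval_of_span_eigenvectors_eq_top (hdiag (idxR i))
  exact consecutive_eigenvalues_distinct_general hF i hz (ha (idxL i)) (ha (idxR i))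
end

section
/- Let F be a field of characteristic ≠ 2 and let M be a nonzero module over the affine Hecke–Clifford algebra H_2^c(F) on which x_1² and x_2² both act as multiplication by the same scalar a ∈ F. Then a = 0. -/
/-! Write `e = c_i c_{i+1}`, so that `e² = -1` and `e` anticommutes with `x_i` and `x_{i+1}`.
Moving `s_i` past `x_i` twice leaves the error term
`D = x_{i+1}² s_i - s_i x_i² = x_{i+1} (1 + e) + (1 + e) x_i`. Since
`D = (x_i + x_{i+1}) + (x_{i+1} - x_i) e`, the two anticommutations give
`D² = 2 (x_i² + x_{i+1}²)`. If `x_i²` and `x_{i+1}²` act as scalars `a` and `b`, then `D` acts as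
`(b - a) s_i`, and `s_i² = 1` turns the formula for `D²` into `(a - b)² = 2 (a + b)`.
For `a = b` this reads `4 a = 0`.
-/

section Anticommutation

variable {R : Type*} [Ring R]

theorem semiconjBy_neg_self_iff {a b : R} : SemiconjBy a b (-b) ↔ b * a = -(a * b) := by
  rw [SemiconjBy, neg_mul, eq_neg_iff_add_eq_zero, eq_neg_iff_add_eq_zero, add_comm]

theorem mul_mul_mul_self_eq_neg_one_of_anticommute {c d : R} (hc : c * c = 1) (hd : d * d = 1)
    (hcd : c * d = -(d * c)) : c * d * (c * d) = -1 :=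
  calc c * d * (c * d) = c * (d * c) * d := by noncomm_ring
    _ = -(c * c * (d * d)) := by rw [← neg_eq_iff_eq_neg.mpr hcd]; noncomm_ring
    _ = -1 := by rw [hc, hd, one_mul]

theorem add_mul_sq_of_anticommute {p q e : R} (hpq : Commute p q) (hp : SemiconjBy e p (-p))
    (hq : SemiconjBy e q (-q)) (he : e * e = -1) : (p + q * e) ^ 2 = p ^ 2 + q ^ 2 :=
  calc (p + q * e) ^ 2 = p ^ 2 + p * q * e + q * (e * p) + q * (e * q) * e := by noncomm_ring
    _ = p ^ 2 + (p * q - q * p) * e - q ^ 2 * (e * e) := by rw [hp.eq, hq.eq]; noncomm_ring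
    _ = p ^ 2 + q ^ 2 := by rw [hpq.eq, he]; noncomm_ring

theorem mul_one_add_add_one_add_mul_sq_of_anticommute {x y e : R} (hxy : Commute x y)
    (hx : SemiconjBy e x (-x)) (hy : SemiconjBy e y (-y)) (he : e * e = -1) :
    (y * (1 + e) + (1 + e) * x) ^ 2 = 2 * (x ^ 2 + y ^ 2) := by
  have hpq : Commute (x + y) (y - x) :=
    (hxy.sub_right (.refl x)).add_left ((Commute.refl y).sub_right hxy.symm)
  have hp : SemiconjBy e (x + y) (-(x + y)) := by
    simpa only [neg_add] using hx.add_right hy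
  have hq : SemiconjBy e (y - x) (-(y - x)) := by
    simpa only [neg_sub_neg, neg_sub] using hy.sub_right hx
  calc (y * (1 + e) + (1 + e) * x) ^ 2 = ((x + y) + (y - x) * e) ^ 2 := by
        rw [add_mul 1 e, hx.eq]; noncomm_ring
    _ = (x + y) ^ 2 + (y - x) ^ 2 := add_mul_sq_of_anticommute hpq hp hq he
    _ = 2 * (x ^ 2 + y ^ 2) + (x * y - y * x) + (y * x - x * y) := by noncomm_ring
    _ = 2 * (x ^ 2 + y ^ 2) := by rw [hxy.eq, sub_self, add_zero, add_zero]

end Anticommutation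

theorem sq_mul_sub_mul_sq_of_mul_eq_sub {R : Type*} [Ring R] {s x y t : R}
    (h : s * x = y * s - t) : y ^ 2 * s - s * x ^ 2 = y * t + t * x :=
  calc y ^ 2 * s - s * x ^ 2 = y * (y * s) - s * x * x := by noncomm_ring
    _ = y * (y * s) - (y * (s * x) - t * x) := by rw [h, sub_mul, mul_assoc, h]
    _ = y * t + t * x := by rw [h]; noncomm_ring

namespace AHC

variable {F : Type} [Field F] {n : ℕ}

theorem idxL_ne_idxR (i : Fin (n - 1)) : idxL i ≠ idxR i := by
  simp [idxL, idxR]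

theorem sE_mul_self (i : Fin (n - 1)) : sE F n i * sE F n i = 1 := by
  simpa only [sE, map_mul, map_one] using RingQuot.mkAlgHom_rel F (AHCRel.s_sq i)

theorem commute_xE (i j : Fin n) : Commute (xE F n i) (xE F n j) := by
  simpa only [Commute, SemiconjBy, xE, map_mul] using RingQuot.mkAlgHom_rel F (AHCRel.x_comm i j)

theorem cE_mul_self (i : Fin n) : cE F n i * cE F n i = 1 := by
  simpa only [cE, map_mul, map_one] using RingQuot.mkAlgHom_rel F (AHCRel.c_sq i)

theorem cE_mul_cE_of_ne {i j : Fin n} (h : i ≠ j) :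
    cE F n i * cE F n j = -(cE F n j * cE F n i) := by
  simpa only [cE, map_mul, map_neg] using RingQuot.mkAlgHom_rel F (AHCRel.c_anticomm i j h)

theorem semiconjBy_cE_xE_self (i : Fin n) : SemiconjBy (cE F n i) (xE F n i) (-xE F n i) :=
  semiconjBy_neg_self_iff.mpr <| by
    simpa only [xE, cE, map_mul, map_neg] using RingQuot.mkAlgHom_rel F (AHCRel.x_c_anti i)

theorem commute_xE_cE_of_ne {i j : Fin n} (h : i ≠ j) : Commute (xE F n i) (cE F n j) := by
  simpa only [Commute, SemiconjBy, xE, cE, map_mul] using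
    RingQuot.mkAlgHom_rel F (AHCRel.x_c_comm i j h)

/-- The Clifford element `c_i c_{i+1}`, which appears in the relation between `s_i` and `x_i`. -/
noncomputable def cliffordProd (F : Type) [Field F] {n : ℕ} (i : Fin (n - 1)) : AHC F n :=
  cE F n (idxL i) * cE F n (idxR i)

/-- The element `x_{i+1} (1 + c_i c_{i+1}) + (1 + c_i c_{i+1}) x_i`, which measures the failure of
`s_i` to intertwine `x_i²` with `x_{i+1}²`. -/
noncomputable def intertwiningDefect (F : Type) [Field F] {n : ℕ} (i : Fin (n - 1)) : AHC F n :=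
  xE F n (idxR i) * (1 + cliffordProd F i) + (1 + cliffordProd F i) * xE F n (idxL i)

theorem sE_mul_xE (i : Fin (n - 1)) :
    sE F n i * xE F n (idxL i) = xE F n (idxR i) * sE F n i - (1 + cliffordProd F i) := by
  simpa only [sE, xE, cliffordProd, cE, map_mul, map_sub, map_add, map_one] using
    RingQuot.mkAlgHom_rel F (AHCRel.s_x i)

theorem cliffordProd_mul_self (i : Fin (n - 1)) : cliffordProd F i * cliffordProd F i = -1 :=
  mul_mul_mul_self_eq_neg_one_of_anticommute (cE_mul_self _) (cE_mul_self _)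
    (cE_mul_cE_of_ne (idxL_ne_idxR i))

theorem semiconjBy_cliffordProd_xE_idxL (i : Fin (n - 1)) :
    SemiconjBy (cliffordProd F i) (xE F n (idxL i)) (-xE F n (idxL i)) :=
  (semiconjBy_cE_xE_self _).mul_left (commute_xE_cE_of_ne (idxL_ne_idxR i)).symm

theorem semiconjBy_cliffordProd_xE_idxR (i : Fin (n - 1)) :
    SemiconjBy (cliffordProd F i) (xE F n (idxR i)) (-xE F n (idxR i)) :=
  (commute_xE_cE_of_ne (idxL_ne_idxR i).symm).symm.neg_right.semiconjBy.mul_left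
    (semiconjBy_cE_xE_self _)

theorem intertwiningDefect_eq_sub (i : Fin (n - 1)) :
    intertwiningDefect F i = xE F n (idxR i) ^ 2 * sE F n i - sE F n i * xE F n (idxL i) ^ 2 :=
  (sq_mul_sub_mul_sq_of_mul_eq_sub (sE_mul_xE i)).symm

theorem intertwiningDefect_sq (i : Fin (n - 1)) :
    intertwiningDefect F i ^ 2 = 2 * (xE F n (idxL i) ^ 2 + xE F n (idxR i) ^ 2) :=
  mul_one_add_add_one_add_mul_sq_of_anticommute (commute_xE _ _)
    (semiconjBy_cliffordProd_xE_idxL i) (semiconjBy_cliffordProd_xE_idxR i)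
    (cliffordProd_mul_self i)

theorem intertwiningDefect_smul {M : Type*} [AddCommGroup M] [Module F M] [Module (AHC F n) M]
    [IsScalarTower F (AHC F n) M] (i : Fin (n - 1)) {a b : F}
    (ha : ∀ v : M, xE F n (idxL i) ^ 2 • v = a • v)
    (hb : ∀ v : M, xE F n (idxR i) ^ 2 • v = b • v) (v : M) :
    intertwiningDefect F i • v = (b - a) • sE F n i • v := by
  rw [intertwiningDefect_eq_sub, sub_smul, mul_smul, mul_smul, ha, hb, smul_algebra_smul_comm,
    ← sub_smul]

end AHC

open AHC in
theorem same_scalar_implies_zero_general {F : Type} [Field F] {n : ℕ} (i : Fin (n - 1))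
    {M : Type*} [AddCommGroup M] [Module F M] [Module (AHC F n) M] [IsScalarTower F (AHC F n) M]
    (hM : ∃ v : M, v ≠ 0) {a b : F}
    (ha : ∀ v : M, xE F n (idxL i) ^ 2 • v = a • v)
    (hb : ∀ v : M, xE F n (idxR i) ^ 2 • v = b • v) :
    (a - b) ^ 2 = 2 * (a + b) := by
  obtain ⟨v, hv⟩ := hM
  refine smul_left_injective F hv ?_
  calc (a - b) ^ 2 • v = (b - a) • (b - a) • v := by rw [smul_smul, ← sq, sub_sq_comm]
    _ = intertwiningDefect F i ^ 2 • v := by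
        rw [sq, mul_smul, intertwiningDefect_smul i ha hb v, intertwiningDefect_smul i ha hb,
          smul_algebra_smul_comm (b - a) (sE F n i), ← mul_smul (sE F n i), sE_mul_self, one_smul]
    _ = (2 * (a + b)) • v := by
        rw [intertwiningDefect_sq, two_mul, two_mul]
        simp only [add_smul, ha, hb]

/-- if `M` is a nonzero `H_2^c(F)`-module (char F ≠ 2) on which
`x_1²` and `x_2²` both act as multiplication by the same scalar `a ∈ F`, then
`a = 0`. -/
theorem same_scalar_implies_zero (F : Type) [Field F] (hF : (2 : F) ≠ 0)
    (M : Type) [AddCommGroup M] [Module F M] [Module (AHC F 2) M]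
    [IsScalarTower F (AHC F 2) M]
    (hM : ∃ v : M, v ≠ 0) (a : F)
    (h1 : ∀ v : M, (xE F 2 0) ^ 2 • v = a • v)
    (h2 : ∀ v : M, (xE F 2 1) ^ 2 • v = a • v) :
    a = 0 := by
  have h : (a - a) ^ 2 = 2 * (a + a) := same_scalar_implies_zero_general 0 hM h1 h2
  simpa [← two_mul, hF] using h
end
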